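/- Let d ≥ 2. There exists a constant C_d depending only on d with the following property: whenever ρ⁰ and ρ¹ are finite Borel measures on ℝ^d and ψ ∈ L¹_loc(ℝ^d) has distributional gradient ∇ψ belonging to L¹(ℝ^d; ℝ^d) and satisfies Δψ = ρ¹ − ρ⁰ in the sense of distributions (i.e. ∫_{ℝ^d} ψ(x) Δφ(x) dx = ∫ φ dρ¹ − ∫ φ dρ⁰ for every smooth compactly supported φ : ℝ^d → ℝ), then for every δ with 0 < δ ≤ 1/2, ‖G_δ * ∇ψ − ∇ψ‖_{L¹(ℝ^d)} ≤ C_d · δ · (|log δ| + 1) · (ρ¹(ℝ^d) + ρ⁰(ℝ^d)). -/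

import Mathlib

open MeasureTheory Real

/-!
Let `K` be the standard Gaussian and `K_r(z) = r^{-d} K(z / r)`. The scale derivative of the
mollifier is a Laplacian: `∂_r K_r = r Δ[Φ_r]` with `Φ = (2π)⁻¹ K`, because
`d K + z · ∇K = -ΔΦ`. In the convolution `∂_r K_r * ∇ψ` the Laplacian can be moved onto the
potential, where it produces `ρ¹ - ρ⁰`, and one derivative is left on `Φ`:
`∂_r (K_r * ∇ψ) = (∇Φ)_r * (ρ¹ - ρ⁰)`. Dilation preserves the `L¹` norm of `∇Φ`, so the right-hand
side is bounded in `L¹` by `‖∇Φ‖_{L¹} (ρ¹ + ρ⁰)(ℝ^d)` uniformly in `r`, and integrating over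
`0 < r ≤ δ` gives a bound linear in `δ`, with no logarithm.
-/

namespace PoissonMollification

open Filter Module
open ContinuousLinearMap (lsmul)
open scoped Topology ENNReal Convolution ContDiff Gradient InnerProductSpace Laplacian
  RealInnerProductSpace

section Dilation

variable {E F : Type*} [NormedAddCommGroup E] [NormedSpace ℝ E] [NormedAddCommGroup F]
  [NormedSpace ℝ F]

/-- The dilation `f_r(z) = r^{-d} f(z / r)` of a kernel `f` on a `d`-dimensional space. -/
noncomputable def dilate (r : ℝ) (f : E → F) (z : E) : F :=
  (r ^ finrank ℝ E)⁻¹ • f (r⁻¹ • z)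

theorem norm_dilate_le {f : E → F} {B : ℝ} (hB : ∀ z, ‖f z‖ ≤ B) {ε r : ℝ} (hε : 0 < ε)
    (hr : ε ≤ r) (z : E) : ‖dilate r f z‖ ≤ (ε ^ finrank ℝ E)⁻¹ * B := by
  have hr₀ : 0 < r := hε.trans_le hr
  rw [dilate, norm_smul, norm_of_nonneg (by positivity)]
  gcongr
  exact hB _

theorem continuous_dilate {f : E → F} (hf : Continuous f) (r : ℝ) : Continuous (dilate r f) :=
  (hf.comp (continuous_const_smul _)).const_smul _

theorem continuousAt_dilate_scale {f : E → F} (hf : Continuous f) {r : ℝ} (hr : r ≠ 0) (z : E) :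
    ContinuousAt (fun r ↦ dilate r f z) r :=
  ((continuousAt_id.pow _).inv₀ (pow_ne_zero _ hr)).smul
    (hf.continuousAt.comp ((continuousAt_inv₀ hr).smul continuousAt_const))

theorem hasDerivAt_dilate_scale {f : E → F} {r : ℝ} (hr : r ≠ 0) {z : E}
    (hf : DifferentiableAt ℝ f (r⁻¹ • z)) :
    HasDerivAt (fun r ↦ dilate r f z)
      (-(r⁻¹ • dilate r (fun w ↦ (finrank ℝ E : ℝ) • f w + fderiv ℝ f w w) z)) r := by
  have hpow : HasDerivAt (fun r : ℝ ↦ (r ^ finrank ℝ E)⁻¹)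
      (-(r⁻¹ * finrank ℝ E * (r ^ finrank ℝ E)⁻¹)) r := by
    refine ((hasDerivAt_pow (finrank ℝ E) r).fun_inv (pow_ne_zero _ hr)).congr_deriv ?_
    rcases finrank ℝ E with _ | n
    · simp
    · rw [Nat.add_sub_cancel]
      field_simp
      ring
  have hinner : HasDerivAt (fun r : ℝ ↦ f (r⁻¹ • z))
      (-(r⁻¹ • fderiv ℝ f (r⁻¹ • z) (r⁻¹ • z))) r := by
    refine (hf.hasFDerivAt.comp_hasDerivAt r ((hasDerivAt_inv hr).smul_const z)).congr_deriv ?_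
    rw [← map_smul, ← map_neg, smul_smul, neg_smul, ← sq, inv_pow]
  refine (hpow.smul hinner).congr_deriv ?_
  simp only [dilate]
  module

variable [MeasurableSpace E] [BorelSpace E]

theorem measurable_uncurry_dilate [MeasurableSpace F] [BorelSpace F] [SecondCountableTopology F]
    {f : E → F} (hf : Measurable f) : Measurable fun p : ℝ × E ↦ dilate p.1 f p.2 := by
  unfold dilate
  fun_prop

variable [FiniteDimensional ℝ E] {μ : Measure E} [μ.IsAddHaarMeasure]

theorem lintegral_enorm_dilate_mul (f : E → F) (w : E → ℝ≥0∞) {r : ℝ} (hr : 0 < r) :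
    ∫⁻ z, ‖dilate r f z‖ₑ * w z ∂μ = ∫⁻ z, ‖f z‖ₑ * w (r • z) ∂μ := by
  have hpos : 0 < (r ^ finrank ℝ E)⁻¹ := by positivity
  have hscale : ∫⁻ z, ‖dilate r f z‖ₑ * w z ∂(μ.map (MeasurableEquiv.smul₀ r hr.ne')) =
      ‖(r ^ finrank ℝ E)⁻¹‖ₑ * ∫⁻ z, ‖f z‖ₑ * w (r • z) ∂μ := by
    rw [lintegral_map_equiv, ← lintegral_const_mul' _ _ enorm_ne_top]
    simp only [dilate, MeasurableEquiv.coe_smul₀, inv_smul_smul₀ hr.ne', enorm_smul, mul_assoc]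
  rw [MeasurableEquiv.coe_smul₀, Measure.map_addHaar_smul μ hr.ne', lintegral_smul_measure,
    abs_of_pos hpos, smul_eq_mul, Real.enorm_of_nonneg hpos.le] at hscale
  exact (ENNReal.mul_right_inj (ENNReal.ofReal_pos.2 hpos).ne' ENNReal.ofReal_ne_top).1 hscale

theorem lintegral_enorm_dilate (f : E → F) {r : ℝ} (hr : 0 < r) :
    ∫⁻ z, ‖dilate r f z‖ₑ ∂μ = ∫⁻ z, ‖f z‖ₑ ∂μ := by
  simpa only [mul_one] using lintegral_enorm_dilate_mul f (fun _ ↦ 1) hr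

theorem integral_dilate (f : E → F) {r : ℝ} (hr : 0 < r) :
    ∫ z, dilate r f z ∂μ = ∫ z, f z ∂μ := by
  simp only [dilate]
  rw [integral_smul, Measure.integral_comp_inv_smul_of_nonneg μ f hr.le,
    inv_smul_smul₀ (by positivity)]

theorem integrable_dilate {f : E → F} (hf : Integrable f μ) {r : ℝ} (hr : 0 < r) :
    Integrable (dilate r f) μ :=
  (hf.comp_smul (inv_ne_zero hr.ne')).smul _

theorem lintegral_lintegral_enorm_dilate_sub [MeasurableSpace F] [BorelSpace F] {f : E → F}
    (hf : Measurable f) (ρ : Measure E) [SFinite ρ] {r : ℝ} (hr : 0 < r) :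
    ∫⁻ x, ∫⁻ y, ‖dilate r f (x - y)‖ₑ ∂ρ ∂μ = (∫⁻ z, ‖f z‖ₑ ∂μ) * ρ Set.univ := by
  have hmeas : Measurable fun p : E × E ↦ ‖dilate r f (p.1 - p.2)‖ₑ :=
    ((hf.comp (by fun_prop)).const_smul _).enorm
  rw [lintegral_lintegral_swap hmeas.aemeasurable]
  simp only [lintegral_sub_right_eq_self (fun z ↦ ‖dilate r f z‖ₑ), lintegral_enorm_dilate f hr,
    lintegral_const]

variable {g : E → F}

theorem integrable_smul_comp_sub {k : E → ℝ} {B : ℝ} (hk : Continuous k)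
    (hB : ∀ z, ‖k z‖ ≤ B) (hg : Integrable g μ) (x : E) :
    Integrable (fun t ↦ k t • g (x - t)) μ :=
  (hg.comp_sub_left x).bdd_smul B hk.aestronglyMeasurable (.of_forall hB)

theorem integrable_prod_inv_mul_dilate_smul {H : E → ℝ} {B : ℝ} (hH : Continuous H)
    (hHB : ∀ z, ‖H z‖ ≤ B) (hg : Integrable g μ) {ε δ : ℝ} (hε : 0 < ε) (hεδ : ε ≤ δ) (x : E) :
    Integrable (Function.uncurry fun r t ↦ (r⁻¹ * dilate r H t) • g (x - t))
      ((volume.restrict (Set.uIoc ε δ)).prod μ) := by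
  have : IsFiniteMeasure (volume.restrict (Set.uIoc ε δ)) := ⟨by simp [Set.uIoc]⟩
  have hbound : ∀ᵐ p ∂(volume.restrict (Set.uIoc ε δ)).prod μ,
      ‖p.1⁻¹ * dilate p.1 H p.2‖ ≤ ε⁻¹ * ((ε ^ finrank ℝ E)⁻¹ * B) := by
    filter_upwards [Measure.quasiMeasurePreserving_fst.ae (ae_restrict_mem measurableSet_uIoc)]
      with p hp
    rw [Set.uIoc_of_le hεδ] at hp
    rw [norm_mul, norm_inv, norm_of_nonneg (hε.trans hp.1).le]
    gcongr
    exacts [hp.1.le, norm_dilate_le hHB hε hp.1.le _]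
  exact ((hg.comp_sub_left x).comp_snd _).bdd_smul _ ((measurable_fst.inv.mul
    (measurable_uncurry_dilate hH.measurable)).aestronglyMeasurable) hbound

theorem convolution_dilate_sub [CompleteSpace F] {K H : E → ℝ} {A B : ℝ}
    (hK : Differentiable ℝ K) (hKA : ∀ z, ‖K z‖ ≤ A) (hH : Continuous H) (hHB : ∀ z, ‖H z‖ ≤ B)
    (hKH : ∀ z, (finrank ℝ E : ℝ) * K z + fderiv ℝ K z z = -H z)
    (hg : Integrable g μ) {ε δ : ℝ} (hε : 0 < ε) (hεδ : ε ≤ δ) (x : E) :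
    (dilate δ K ⋆[lsmul ℝ ℝ, μ] g) x - (dilate ε K ⋆[lsmul ℝ ℝ, μ] g) x =
      ∫ r in ε..δ, r⁻¹ • (dilate r H ⋆[lsmul ℝ ℝ, μ] g) x := by
  have hpos : ∀ r ∈ Set.uIcc ε δ, 0 < r := fun r hr ↦
    hε.trans_le (Set.uIcc_of_le hεδ ▸ hr).1
  have hderiv (t : E) : ∀ r ∈ Set.uIcc ε δ,
      HasDerivAt (fun r ↦ dilate r K t) (r⁻¹ * dilate r H t) r := fun r hr ↦ by
    refine (hasDerivAt_dilate_scale (hpos r hr).ne' (hK _)).congr_deriv ?_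
    simp only [dilate, smul_eq_mul, hKH]
    ring
  have hcont (t : E) : ContinuousOn (fun r ↦ r⁻¹ * dilate r H t) (Set.uIcc ε δ) := fun r hr ↦
    ((continuousAt_inv₀ (hpos r hr).ne').mul
      (continuousAt_dilate_scale hH (hpos r hr).ne' t)).continuousWithinAt
  have hK_int {r : ℝ} (hr : 0 < r) : Integrable (fun t ↦ dilate r K t • g (x - t)) μ :=
    integrable_smul_comp_sub (continuous_dilate hK.continuous r) (norm_dilate_le hKA hr le_rfl)
      hg x
  simp only [convolution_lsmul, ← integral_smul, smul_smul]
  rw [intervalIntegral_integral_swap (integrable_prod_inv_mul_dilate_smul hH hHB hg hε hεδ x),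
    ← integral_sub (hK_int (hε.trans_le hεδ)) (hK_int hε)]
  refine integral_congr_ae (.of_forall fun t ↦ ?_)
  simp only [intervalIntegral.integral_smul_const,
    intervalIntegral.integral_eq_sub_of_hasDerivAt (hderiv t) (hcont t).intervalIntegrable,
    sub_smul]

end Dilation

section ApproximateIdentity

variable {E F : Type*} [NormedAddCommGroup E] [MeasurableSpace E] {μ : Measure E}
  [NormedAddCommGroup F] {g : E → F}

/-- The `L¹` modulus of continuity of `g` under translations. -/
noncomputable def translationModulus (μ : Measure E) (g : E → F) (h : E) : ℝ≥0∞ :=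
  ∫⁻ x, ‖g (x - h) - g x‖ₑ ∂μ

theorem translationModulus_zero : translationModulus μ g 0 = 0 := by
  simp [translationModulus]

variable [BorelSpace E] [μ.IsAddHaarMeasure]

theorem translationModulus_le (hg : AEStronglyMeasurable g μ) (h : E) :
    translationModulus μ g h ≤ 2 * ∫⁻ x, ‖g x‖ₑ ∂μ :=
  calc ∫⁻ x, ‖g (x - h) - g x‖ₑ ∂μ
      ≤ ∫⁻ x, (‖g (x - h)‖ₑ + ‖g x‖ₑ) ∂μ := lintegral_mono fun _ ↦ enorm_sub_le
    _ = (∫⁻ x, ‖g (x - h)‖ₑ ∂μ) + ∫⁻ x, ‖g x‖ₑ ∂μ := lintegral_add_right' _ hg.enorm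
    _ = 2 * ∫⁻ x, ‖g x‖ₑ ∂μ := by
      rw [lintegral_sub_right_eq_self (fun x ↦ ‖g x‖ₑ) h, two_mul]

variable [NormedSpace ℝ E] [FiniteDimensional ℝ E]

theorem continuous_translationModulus (hg : Integrable g μ) :
    Continuous (translationModulus μ g) := by
  have : Fact ((1 : ℝ≥0∞) ≠ ⊤) := ⟨ENNReal.one_ne_top⟩
  have hmem : MemLp g 1 μ := memLp_one_iff_integrable.2 hg
  have hedist : translationModulus μ g =
      fun h : E ↦ edist (DomAddAct.mk (-h) +ᵥ hmem.toLp g) (hmem.toLp g) := by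
    funext h
    rw [DomAddAct.mk_vadd_toLp, Lp.edist_toLp_toLp, eLpNorm_one_eq_lintegral_enorm]
    simp [translationModulus, sub_eq_neg_add]
  rw [hedist]
  exact ((DomAddAct.continuous_mk.comp continuous_neg).vadd continuous_const).edist
    continuous_const

variable [NormedSpace ℝ F] [CompleteSpace F] {K : E → ℝ}

theorem lintegral_enorm_convolution_sub_le (hK : Integrable K μ) (hK_one : ∫ z, K z ∂μ = 1)
    (hg : Integrable g μ) :
    ∫⁻ x, ‖(K ⋆[lsmul ℝ ℝ, μ] g) x - g x‖ₑ ∂μ ≤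
      ∫⁻ t, ‖K t‖ₑ * translationModulus μ g t ∂μ := by
  have hpointwise : ∀ᵐ x ∂μ, ‖(K ⋆[lsmul ℝ ℝ, μ] g) x - g x‖ₑ ≤
      ∫⁻ t, ‖K t‖ₑ * ‖g (x - t) - g x‖ₑ ∂μ := by
    filter_upwards [hK.ae_convolution_exists (lsmul ℝ ℝ) hg] with x hx
    have hmean : (K ⋆[lsmul ℝ ℝ, μ] g) x - g x = ∫ t, K t • (g (x - t) - g x) ∂μ := by
      calc (K ⋆[lsmul ℝ ℝ, μ] g) x - g x
          = (∫ t, K t • g (x - t) ∂μ) - ∫ t, K t • g x ∂μ := by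
            rw [convolution_lsmul, integral_smul_const, hK_one, one_smul]
        _ = ∫ t, K t • (g (x - t) - g x) ∂μ := by
            simp only [smul_sub]
            exact (integral_sub hx (hK.smul_const _)).symm
    simpa only [hmean, enorm_smul] using
      enorm_integral_le_lintegral_enorm fun t ↦ K t • (g (x - t) - g x)
  have hmeas : AEMeasurable (Function.uncurry fun x t ↦ ‖K t‖ₑ * ‖g (x - t) - g x‖ₑ)
      (μ.prod μ) :=
    hK.1.enorm.comp_snd.mul ((hg.1.comp_quasiMeasurePreserving
      (quasiMeasurePreserving_sub_of_right_invariant μ μ)).sub hg.1.comp_fst).enorm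
  calc ∫⁻ x, ‖(K ⋆[lsmul ℝ ℝ, μ] g) x - g x‖ₑ ∂μ
      ≤ ∫⁻ x, ∫⁻ t, ‖K t‖ₑ * ‖g (x - t) - g x‖ₑ ∂μ ∂μ := lintegral_mono_ae hpointwise
    _ = ∫⁻ t, ∫⁻ x, ‖K t‖ₑ * ‖g (x - t) - g x‖ₑ ∂μ ∂μ := lintegral_lintegral_swap hmeas
    _ = ∫⁻ t, ‖K t‖ₑ * translationModulus μ g t ∂μ := by
      simp only [translationModulus, lintegral_const_mul' _ _ enorm_ne_top]

theorem tendsto_lintegral_enorm_convolution_dilate_sub (hK : Integrable K μ)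
    (hK_one : ∫ z, K z ∂μ = 1) (hg : Integrable g μ) :
    Tendsto (fun r ↦ ∫⁻ x, ‖(dilate r K ⋆[lsmul ℝ ℝ, μ] g) x - g x‖ₑ ∂μ) (𝓝[>] 0) (𝓝 0) := by
  have hmod : Continuous (translationModulus μ g) := continuous_translationModulus hg
  have hlim : Tendsto (fun r : ℝ ↦ ∫⁻ z, ‖K z‖ₑ * translationModulus μ g (r • z) ∂μ)
      (𝓝[>] 0) (𝓝 (∫⁻ _, 0 ∂μ)) := by
    refine tendsto_lintegral_filter_of_dominated_convergence'
      (fun z ↦ ‖K z‖ₑ * (2 * ∫⁻ x, ‖g x‖ₑ ∂μ)) (.of_forall fun r ↦ ?_)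
      (.of_forall fun r ↦ .of_forall fun z ↦ ?_) ?_ (.of_forall fun z ↦ ?_)
    · exact hK.1.enorm.mul (hmod.comp (continuous_const_smul r)).measurable.aemeasurable
    · exact mul_le_mul_right (translationModulus_le hg.1 _) _
    · rw [lintegral_mul_const'' _ hK.1.enorm]
      exact ENNReal.mul_ne_top hK.2.ne (ENNReal.mul_ne_top ENNReal.ofNat_ne_top hg.2.ne)
    · have hmod_zero : Tendsto (fun r : ℝ ↦ translationModulus μ g (r • z)) (𝓝[>] 0) (𝓝 0) := by
        refine ((hmod.comp (continuous_id.smul continuous_const)).tendsto' (0 : ℝ) 0 ?_).mono_left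
          nhdsWithin_le_nhds
        simp [translationModulus_zero]
      simpa only [mul_zero] using ENNReal.Tendsto.const_mul hmod_zero (.inr enorm_ne_top)
  rw [lintegral_zero] at hlim
  refine tendsto_of_tendsto_of_tendsto_of_le_of_le' tendsto_const_nhds hlim
    (.of_forall fun _ ↦ zero_le) (eventually_mem_nhdsWithin.mono fun r (hr : 0 < r) ↦ ?_)
  rw [← lintegral_enorm_dilate_mul K _ hr]
  exact lintegral_enorm_convolution_sub_le (integrable_dilate hK hr)
    ((integral_dilate K hr).trans hK_one) hg

end ApproximateIdentity

section Calculus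

variable {E : Type*} [NormedAddCommGroup E] [InnerProductSpace ℝ E] {f g : E → ℝ}

theorem continuous_gradient [CompleteSpace E] (hf : ContDiff ℝ 1 f) : Continuous (∇ f) :=
  (InnerProductSpace.toDual ℝ E).symm.continuous.comp (hf.continuous_fderiv one_ne_zero)

theorem hasCompactSupport_gradient [CompleteSpace E] (hf : HasCompactSupport f) :
    HasCompactSupport (∇ f) :=
  (hf.fderiv (𝕜 := ℝ)).comp_left (map_zero (InnerProductSpace.toDual ℝ E).symm)

theorem gradient_mul [CompleteSpace E] {x : E} (hf : DifferentiableAt ℝ f x)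
    (hg : DifferentiableAt ℝ g x) :
    ∇ (fun y ↦ f y * g y) x = f x • ∇ g x + g x • ∇ f x := by
  simp only [gradient, fderiv_fun_mul hf hg, map_add, map_smul]

theorem gradient_comp_add_smul [CompleteSpace E] (f : E → ℝ) (b : E) (c : ℝ) (x : E) :
    ∇ (fun y ↦ f (b + c • y)) x = c • ∇ f (b + c • x) := by
  simp only [gradient, fderiv_comp_smul (f := fun y ↦ f (b + y)), fderiv_comp_add_left, map_smul]

theorem contDiff_fderiv_apply (hf : ContDiff ℝ ∞ f) (v : E) :
    ContDiff ℝ ∞ fun x ↦ fderiv ℝ f x v :=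
  (hf.fderiv_right (by simp)).clm_apply contDiff_const

theorem fderiv_fderiv_apply (hf : ContDiff ℝ 2 f) (v w x : E) :
    fderiv ℝ (fun y ↦ fderiv ℝ f y v) x w = fderiv ℝ (fderiv ℝ f) x w v := by
  rw [fderiv_clm_apply ((hf.fderiv_right (m := 1) le_rfl).differentiable one_ne_zero x)
    (differentiableAt_const v)]
  simp

theorem fderiv_fderiv_apply_comm (hf : ContDiff ℝ 2 f) (v w x : E) :
    fderiv ℝ (fun y ↦ fderiv ℝ f y v) x w = fderiv ℝ (fun y ↦ fderiv ℝ f y w) x v := by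
  rw [fderiv_fderiv_apply hf, fderiv_fderiv_apply hf]
  exact hf.contDiffAt.isSymmSndFDerivAt (by simp) w v

variable [FiniteDimensional ℝ E]

theorem laplacian_eq_sum_fderiv_fderiv {ι : Type*} [Fintype ι] (b : OrthonormalBasis ι ℝ E)
    (hf : ContDiff ℝ 2 f) (x : E) :
    Δ f x = ∑ i, fderiv ℝ (fun y ↦ fderiv ℝ f y (b i)) x (b i) := by
  simp [InnerProductSpace.laplacian_eq_iteratedFDeriv_orthonormalBasis f b,
    iteratedFDeriv_two_apply, fderiv_fderiv_apply hf]

theorem contDiff_laplacian (hf : ContDiff ℝ ∞ f) : ContDiff ℝ ∞ (Δ f) := by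
  rw [funext (laplacian_eq_sum_fderiv_fderiv (stdOrthonormalBasis ℝ E) (contDiff_infty.1 hf 2))]
  exact ContDiff.sum fun i _ ↦ contDiff_fderiv_apply (contDiff_fderiv_apply hf _) _

theorem hasCompactSupport_laplacian (hf : HasCompactSupport f) : HasCompactSupport (Δ f) := by
  refine (hf.iteratedFDeriv (𝕜 := ℝ) 2).mono fun x hx h ↦ hx ?_
  simp [InnerProductSpace.laplacian_eq_iteratedFDeriv_stdOrthonormalBasis, h]

theorem fderiv_laplacian_apply (hf : ContDiff ℝ ∞ f) (x v : E) :
    fderiv ℝ (Δ f) x v = Δ (fun y ↦ fderiv ℝ f y v) x := by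
  let b := stdOrthonormalBasis ℝ E
  have hsmooth (w : E) : ContDiff ℝ ∞ fun y ↦ fderiv ℝ f y w := contDiff_fderiv_apply hf w
  have htwo {h : E → ℝ} (hh : ContDiff ℝ ∞ h) : ContDiff ℝ 2 h := contDiff_infty.1 hh 2
  rw [funext (laplacian_eq_sum_fderiv_fderiv b (htwo hf)),
    laplacian_eq_sum_fderiv_fderiv b (htwo (hsmooth v)), fderiv_fun_sum fun i _ ↦
      (contDiff_fderiv_apply (hsmooth (b i)) (b i)).differentiable (by simp) x, sum_apply]
  refine Finset.sum_congr rfl fun i _ ↦ ?_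
  rw [fderiv_fderiv_apply_comm (htwo (hsmooth _))]
  simp only [fderiv_fderiv_apply_comm (htwo hf) (b i) v]

theorem laplacian_mul (hf : ContDiff ℝ 2 f) (hg : ContDiff ℝ 2 g) (x : E) :
    Δ (fun y ↦ f y * g y) x = f x * Δ g x + 2 * ⟪∇ f x, ∇ g x⟫ + g x * Δ f x := by
  let b := stdOrthonormalBasis ℝ E
  have hdiff {h : E → ℝ} (hh : ContDiff ℝ 2 h) : Differentiable ℝ h := hh.differentiable two_ne_zero
  have hdiff' {h : E → ℝ} (hh : ContDiff ℝ 2 h) (v : E) : Differentiable ℝ fun y ↦ fderiv ℝ h y v :=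
    ((hh.fderiv_right (m := 1) le_rfl).clm_apply contDiff_const).differentiable one_ne_zero
  have hfst (v : E) : (fun y ↦ fderiv ℝ (fun y ↦ f y * g y) y v) =
      fun y ↦ f y * fderiv ℝ g y v + g y * fderiv ℝ f y v := by
    funext y
    simp [fderiv_fun_mul (hdiff hf y) (hdiff hg y)]
  have hsnd (v : E) : fderiv ℝ (fun y ↦ fderiv ℝ (fun y ↦ f y * g y) y v) x v =
      f x * fderiv ℝ (fun y ↦ fderiv ℝ g y v) x v + 2 * (⟪∇ f x, v⟫ * ⟪v, ∇ g x⟫) +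
        g x * fderiv ℝ (fun y ↦ fderiv ℝ f y v) x v := by
    rw [hfst, fderiv_fun_add ((hdiff hf x).fun_mul (hdiff' hg v x))
      ((hdiff hg x).fun_mul (hdiff' hf v x)),
      fderiv_fun_mul (hdiff hf x) (hdiff' hg v x), fderiv_fun_mul (hdiff hg x) (hdiff' hf v x)]
    simp [inner_gradient_left, inner_gradient_right]
    ring
  rw [laplacian_eq_sum_fderiv_fderiv b (hf.mul hg), laplacian_eq_sum_fderiv_fderiv b hf,
    laplacian_eq_sum_fderiv_fderiv b hg, ← b.sum_inner_mul_inner]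
  simp only [hsnd, Finset.sum_add_distrib, Finset.mul_sum]

theorem laplacian_comp_add_smul (hf : ContDiff ℝ 2 f) (b : E) (c : ℝ) (x : E) :
    Δ (fun y ↦ f (b + c • y)) x = c ^ 2 * Δ f (b + c • x) := by
  have hfb : ContDiff ℝ 2 fun y ↦ f (b + y) := hf.comp (contDiff_const.add contDiff_id)
  simp only [InnerProductSpace.laplacian_eq_iteratedFDeriv_stdOrthonormalBasis,
    iteratedFDeriv_comp_const_smul c hfb, iteratedFDeriv_comp_add_left, Finset.mul_sum,
    smul_apply, smul_eq_mul]

theorem sum_fderiv_single_fderiv_single {d : ℕ} {φ : EuclideanSpace ℝ (Fin d) → ℝ}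
    (hφ : ContDiff ℝ 2 φ) (x : EuclideanSpace ℝ (Fin d)) :
    ∑ i : Fin d, fderiv ℝ (fun y ↦ fderiv ℝ φ y (EuclideanSpace.single i (1 : ℝ))) x
      (EuclideanSpace.single i 1) = Δ φ x := by
  simp only [laplacian_eq_sum_fderiv_fderiv (EuclideanSpace.basisFun (Fin d) ℝ) hφ,
    EuclideanSpace.basisFun_apply]

end Calculus

section BoundedTest

variable {E : Type*} [NormedAddCommGroup E] [InnerProductSpace ℝ E] [FiniteDimensional ℝ E]
  {φ χ : E → ℝ} {A B : ℝ}

/-- A smooth test function that need not have compact support, but is bounded by `B` together with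
its gradient and its Laplacian. -/
structure IsBoundedTest (B : ℝ) (φ : E → ℝ) : Prop where
  contDiff : ContDiff ℝ ∞ φ
  abs_le : ∀ x, |φ x| ≤ B
  norm_gradient_le : ∀ x, ‖∇ φ x‖ ≤ B
  abs_laplacian_le : ∀ x, |Δ φ x| ≤ B

namespace IsBoundedTest

theorem nonneg (hφ : IsBoundedTest B φ) : 0 ≤ B :=
  (abs_nonneg _).trans (hφ.abs_le 0)

theorem differentiable (hφ : IsBoundedTest B φ) : Differentiable ℝ φ :=
  hφ.contDiff.differentiable (by simp)

theorem continuous_gradient (hφ : IsBoundedTest B φ) : Continuous (∇ φ) :=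
  PoissonMollification.continuous_gradient (hφ.contDiff.of_le (by simp))

theorem continuous_laplacian (hφ : IsBoundedTest B φ) : Continuous (Δ φ) :=
  (contDiff_laplacian hφ.contDiff).continuous

theorem exists_of_exists_bounds (hφ : ContDiff ℝ ∞ φ) (h_bound : ∃ B, ∀ x, |φ x| ≤ B)
    (h_gradient : ∃ B, ∀ x, ‖∇ φ x‖ ≤ B) (h_laplacian : ∃ B, ∀ x, |Δ φ x| ≤ B) :
    ∃ B, IsBoundedTest B φ := by
  obtain ⟨B₀, hB₀⟩ := h_bound
  obtain ⟨B₁, hB₁⟩ := h_gradient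
  obtain ⟨B₂, hB₂⟩ := h_laplacian
  exact ⟨max B₀ (max B₁ B₂), hφ, fun x ↦ le_max_of_le_left (hB₀ x),
    fun x ↦ le_max_of_le_right (le_max_of_le_left (hB₁ x)),
    fun x ↦ le_max_of_le_right (le_max_of_le_right (hB₂ x))⟩

theorem exists_of_hasCompactSupport (hφ : ContDiff ℝ ∞ φ) (hφ_supp : HasCompactSupport φ) :
    ∃ B, IsBoundedTest B φ :=
  exists_of_exists_bounds hφ (hφ_supp.exists_bound_of_continuous hφ.continuous)
    ((hasCompactSupport_gradient hφ_supp).exists_bound_of_continuous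
      (PoissonMollification.continuous_gradient (hφ.of_le (by simp))))
    ((hasCompactSupport_laplacian hφ_supp).exists_bound_of_continuous
      (contDiff_laplacian hφ).continuous)

theorem mul (hφ : IsBoundedTest A φ) (hχ : IsBoundedTest B χ) :
    IsBoundedTest (4 * (A * B)) fun x ↦ φ x * χ x := by
  have hA := hφ.nonneg
  have hAB : 0 ≤ A * B := mul_nonneg hA hχ.nonneg
  have hφχ (x : E) : |φ x * χ x| ≤ A * B := by
    rw [abs_mul]
    exact mul_le_mul (hφ.abs_le x) (hχ.abs_le x) (abs_nonneg _) hA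
  refine ⟨hφ.contDiff.mul hχ.contDiff, fun x ↦ (hφχ x).trans (by linarith), fun x ↦ ?_,
    fun x ↦ ?_⟩
  · rw [gradient_mul (hφ.differentiable x) (hχ.differentiable x)]
    calc ‖φ x • ∇ χ x + χ x • ∇ φ x‖
        ≤ |φ x| * ‖∇ χ x‖ + |χ x| * ‖∇ φ x‖ := by
          simpa only [norm_smul, norm_eq_abs] using norm_add_le (φ x • ∇ χ x) (χ x • ∇ φ x)
      _ ≤ A * B + B * A := by
          gcongr
          exacts [hφ.abs_le x, hχ.norm_gradient_le x, hχ.nonneg, hχ.abs_le x,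
            hφ.norm_gradient_le x]
      _ ≤ 4 * (A * B) := by linarith
  · rw [laplacian_mul (contDiff_infty.1 hφ.contDiff 2) (contDiff_infty.1 hχ.contDiff 2)]
    calc |φ x * Δ χ x + 2 * ⟪∇ φ x, ∇ χ x⟫ + χ x * Δ φ x|
        ≤ |φ x| * |Δ χ x| + 2 * (‖∇ φ x‖ * ‖∇ χ x‖) + |χ x| * |Δ φ x| := by
          rw [← abs_mul, ← abs_mul]
          refine (abs_add_three _ _ _).trans ?_
          rw [abs_mul 2, abs_two]
          gcongr
          exact abs_real_inner_le_norm _ _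
      _ ≤ A * B + 2 * (A * B) + B * A := by
          gcongr
          exacts [hφ.abs_le x, hχ.abs_laplacian_le x, hφ.norm_gradient_le x,
            hχ.norm_gradient_le x, hχ.nonneg, hχ.abs_le x, hφ.abs_laplacian_le x]
      _ = 4 * (A * B) := by ring

theorem comp_add_smul (hφ : IsBoundedTest B φ) (b : E) (c : ℝ) :
    IsBoundedTest (max 1 |c| ^ 2 * B) fun x ↦ φ (b + c • x) := by
  have hB := hφ.nonneg
  have hone : 1 ≤ max 1 |c| := le_max_left _ _
  refine ⟨hφ.contDiff.comp (by fun_prop), fun x ↦ ?_, fun x ↦ ?_, fun x ↦ ?_⟩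
  · exact (hφ.abs_le _).trans (le_mul_of_one_le_left hB (one_le_pow₀ hone))
  · rw [gradient_comp_add_smul, norm_smul, norm_eq_abs]
    have hc : |c| ≤ max 1 |c| ^ 2 := (le_max_right _ _).trans (le_self_pow₀ hone two_ne_zero)
    exact mul_le_mul hc (hφ.norm_gradient_le _) (norm_nonneg _) (by positivity)
  · rw [laplacian_comp_add_smul (contDiff_infty.1 hφ.contDiff 2), abs_mul, abs_pow]
    gcongr
    exacts [le_max_right _ _, hφ.abs_laplacian_le _]

theorem exists_compactlySupported_approx (hφ : IsBoundedTest B φ) :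
    ∃ (C : ℝ) (φs : ℕ → E → ℝ), (∀ n, IsBoundedTest C (φs n) ∧ HasCompactSupport (φs n)) ∧
      ∀ x, ∀ᶠ n in atTop, φs n =ᶠ[𝓝 x] φ := by
  let χ : ContDiffBump (0 : E) := ⟨1, 2, one_pos, one_lt_two⟩
  let c (n : ℕ) : ℝ := 1 / (n + 1)
  have hc_pos (n : ℕ) : 0 < c n := Nat.one_div_pos_of_nat
  have hc_le (n : ℕ) : |c n| ≤ 1 := by
    rw [abs_of_pos (hc_pos n)]
    exact div_le_one_of_le₀ (by simp) (by positivity)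
  obtain ⟨A, hχ⟩ := exists_of_hasCompactSupport (χ.contDiff (n := ⊤)) χ.hasCompactSupport
  refine ⟨4 * (A * B), fun n x ↦ χ (c n • x) * φ x, fun n ↦ ⟨?_, ?_⟩, fun x ↦ ?_⟩
  · simpa only [zero_add, max_eq_left (hc_le n), one_pow, one_mul] using
      (hχ.comp_add_smul 0 (c n)).mul hφ
  · exact (χ.hasCompactSupport.comp_smul (hc_pos n).ne').mul_right
  · have hc_lim : Tendsto (fun n ↦ c n • x) atTop (𝓝 0) := by
      simpa only [zero_smul] using
        (tendsto_one_div_add_atTop_nhds_zero_nat (𝕜 := ℝ)).smul_const x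
    filter_upwards [hc_lim.eventually χ.eventuallyEq_one.eventually_nhds] with n hn
    have hcont : ContinuousAt (fun y ↦ c n • y) x := (continuous_const_smul _).continuousAt
    filter_upwards [hcont.eventually hn] with y hy
    rw [hy, Pi.one_apply, one_mul]

end IsBoundedTest

end BoundedTest

section WeakPoissonGradient

variable {E : Type*} [NormedAddCommGroup E] [InnerProductSpace ℝ E] [FiniteDimensional ℝ E]
  [MeasurableSpace E] [BorelSpace E] {g : E → E} {ρ₀ ρ₁ : Measure E}

/-- `Δ g = ∇ (ρ₁ - ρ₀)` in the sense of distributions. This is what the equations `g = ∇ ψ` and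
`Δ ψ = ρ₁ - ρ₀` say about `g` alone, after elimination of the potential `ψ`. -/
def IsWeakPoissonGradient (g : E → E) (ρ₀ ρ₁ : Measure E) : Prop :=
  ∀ φ : E → ℝ, ContDiff ℝ ∞ φ → HasCompactSupport φ →
    ∫ x, Δ φ x • g x = (∫ x, ∇ φ x ∂ρ₀) - ∫ x, ∇ φ x ∂ρ₁

theorem isWeakPoissonGradient_of_potential [IsFiniteMeasureOnCompacts ρ₀]
    [IsFiniteMeasureOnCompacts ρ₁] {ψ : E → ℝ} (hψ : LocallyIntegrable ψ)
    (hgrad : ∀ φ : E → ℝ, ContDiff ℝ ∞ φ → HasCompactSupport φ →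
      ∫ x, ψ x • ∇ φ x = -∫ x, φ x • g x)
    (hlap : ∀ φ : E → ℝ, ContDiff ℝ ∞ φ → HasCompactSupport φ →
      ∫ x, ψ x * Δ φ x = (∫ x, φ x ∂ρ₁) - ∫ x, φ x ∂ρ₀) :
    IsWeakPoissonGradient g ρ₀ ρ₁ := by
  intro φ hφ hφ_supp
  have hΔ : ContDiff ℝ ∞ (Δ φ) := contDiff_laplacian hφ
  have hΔ_supp : HasCompactSupport (Δ φ) := hasCompactSupport_laplacian hφ_supp
  have hint : Integrable fun x ↦ ψ x • ∇ (Δ φ) x :=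
    hψ.integrable_smul_right_of_hasCompactSupport (continuous_gradient (hΔ.of_le (by simp)))
      (hasCompactSupport_gradient hΔ_supp)
  have hint_grad (ρ : Measure E) [IsFiniteMeasureOnCompacts ρ] : Integrable (∇ φ) ρ :=
    (continuous_gradient (hφ.of_le (by simp))).integrable_of_hasCompactSupport
      (hasCompactSupport_gradient hφ_supp)
  rw [← neg_eq_iff_eq_neg.2 (hgrad _ hΔ hΔ_supp)]
  refine ext_inner_left ℝ fun v ↦ ?_
  calc ⟪v, -∫ x, ψ x • ∇ (Δ φ) x⟫
      = -∫ x, ψ x * Δ (fun y ↦ fderiv ℝ φ y v) x := by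
        rw [inner_neg_right, ← integral_inner hint]
        simp only [inner_smul_right, inner_gradient_right, conj_trivial,
          fderiv_laplacian_apply hφ]
    _ = (∫ x, fderiv ℝ φ x v ∂ρ₀) - ∫ x, fderiv ℝ φ x v ∂ρ₁ := by
        rw [hlap _ (contDiff_fderiv_apply hφ v) (hφ_supp.fderiv_apply (𝕜 := ℝ) v), neg_sub]
    _ = ⟪v, (∫ x, ∇ φ x ∂ρ₀) - ∫ x, ∇ φ x ∂ρ₁⟫ := by
        rw [inner_sub_right, ← integral_inner (hint_grad ρ₀), ← integral_inner (hint_grad ρ₁)]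
        simp only [inner_gradient_right, conj_trivial]

namespace IsWeakPoissonGradient

variable [IsFiniteMeasure ρ₀] [IsFiniteMeasure ρ₁] {φ : E → ℝ} {B : ℝ}

theorem integral_laplacian_smul (h : IsWeakPoissonGradient g ρ₀ ρ₁) (hg : Integrable g)
    (hφ : IsBoundedTest B φ) :
    ∫ x, Δ φ x • g x = (∫ x, ∇ φ x ∂ρ₀) - ∫ x, ∇ φ x ∂ρ₁ := by
  obtain ⟨C, φs, hφs, hlim⟩ := hφ.exists_compactlySupported_approx
  have hlap : Tendsto (fun n ↦ ∫ x, Δ (φs n) x • g x) atTop (𝓝 (∫ x, Δ φ x • g x)) := by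
    refine tendsto_integral_of_dominated_convergence (fun x ↦ C * ‖g x‖) (fun n ↦ ?_)
      (hg.norm.const_mul C) (fun n ↦ .of_forall fun x ↦ ?_) (.of_forall fun x ↦ ?_)
    · exact (hφs n).1.continuous_laplacian.aestronglyMeasurable.smul hg.1
    · rw [norm_smul]
      gcongr
      exact (hφs n).1.abs_laplacian_le x
    · exact tendsto_const_nhds.congr' ((hlim x).mono fun n hn ↦ by
        simp only [(InnerProductSpace.laplacian_congr_nhds hn).eq_of_nhds])
  have hgrad (ρ : Measure E) [IsFiniteMeasure ρ] :
      Tendsto (fun n ↦ ∫ x, ∇ (φs n) x ∂ρ) atTop (𝓝 (∫ x, ∇ φ x ∂ρ)) :=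
    tendsto_integral_of_dominated_convergence (fun _ ↦ C)
      (fun n ↦ (hφs n).1.continuous_gradient.aestronglyMeasurable) (integrable_const C)
      (fun n ↦ .of_forall (hφs n).1.norm_gradient_le)
      (.of_forall fun x ↦ tendsto_const_nhds.congr' ((hlim x).mono fun n hn ↦
        hn.gradient_eq.symm))
  exact tendsto_nhds_unique hlap (((hgrad ρ₀).sub (hgrad ρ₁)).congr fun n ↦
    (h _ (hφs n).1.contDiff (hφs n).2).symm)

theorem convolution_dilate_laplacian (h : IsWeakPoissonGradient g ρ₀ ρ₁) (hg : Integrable g)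
    (hφ : IsBoundedTest B φ) {r : ℝ} (hr : r ≠ 0) (x : E) :
    (dilate r (Δ φ) ⋆[lsmul ℝ ℝ, volume] g) x =
      r • ((∫ y, dilate r (∇ φ) (x - y) ∂ρ₁) - ∫ y, dilate r (∇ φ) (x - y) ∂ρ₀) := by
  have hsub (y : E) : r⁻¹ • (x - y) = r⁻¹ • x + -r⁻¹ • y := by module
  have hweak := h.integral_laplacian_smul hg (hφ.comp_add_smul (r⁻¹ • x) (-r⁻¹))
  simp only [laplacian_comp_add_smul (contDiff_infty.1 hφ.contDiff 2), gradient_comp_add_smul,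
    mul_smul, integral_smul] at hweak
  simp only [← hsub] at hweak
  have hscale : ∫ y, Δ φ (r⁻¹ • (x - y)) • g y =
      r • ((∫ y, ∇ φ (r⁻¹ • (x - y)) ∂ρ₁) - ∫ y, ∇ φ (r⁻¹ • (x - y)) ∂ρ₀) := by
    rw [← inv_smul_smul₀ (pow_ne_zero 2 (neg_ne_zero.2 (inv_ne_zero hr)))
      (∫ y, Δ φ (r⁻¹ • (x - y)) • g y), hweak]
    match_scalars <;> field_simp
  rw [convolution_lsmul_swap]
  simp only [dilate, smul_assoc, integral_smul, hscale]
  module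

end IsWeakPoissonGradient

end WeakPoissonGradient

section MollificationError

variable {E : Type*} [NormedAddCommGroup E] [InnerProductSpace ℝ E] [FiniteDimensional ℝ E]
  [MeasurableSpace E] [BorelSpace E] {g : E → E} {ρ₀ ρ₁ : Measure E} [IsFiniteMeasure ρ₀]
  [IsFiniteMeasure ρ₁] {K φ : E → ℝ} {A B : ℝ}

namespace IsWeakPoissonGradient

theorem enorm_convolution_dilate_sub_le (h : IsWeakPoissonGradient g ρ₀ ρ₁) (hg : Integrable g)
    (hK : Differentiable ℝ K) (hKA : ∀ z, ‖K z‖ ≤ A) (hφ : IsBoundedTest B φ)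
    (hKφ : ∀ z, (finrank ℝ E : ℝ) * K z + fderiv ℝ K z z = -Δ φ z) {ε δ : ℝ} (hε : 0 < ε)
    (hεδ : ε ≤ δ) (x : E) :
    ‖(dilate δ K ⋆[lsmul ℝ ℝ, volume] g) x - (dilate ε K ⋆[lsmul ℝ ℝ, volume] g) x‖ₑ ≤
      ∫⁻ r in Set.Ioc ε δ, ∫⁻ y, ‖dilate r (∇ φ) (x - y)‖ₑ ∂(ρ₀ + ρ₁) := by
  rw [convolution_dilate_sub hK hKA hφ.continuous_laplacian hφ.abs_laplacian_le hKφ hg hε hεδ x,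
    intervalIntegral.integral_of_le hεδ]
  refine (enorm_integral_le_lintegral_enorm _).trans
    (setLIntegral_mono' measurableSet_Ioc fun r hr ↦ ?_)
  have hr : r ≠ 0 := (hε.trans hr.1).ne'
  rw [h.convolution_dilate_laplacian hg hφ hr, inv_smul_smul₀ hr, lintegral_add_measure, add_comm]
  refine enorm_sub_le.trans ?_
  gcongr <;> exact enorm_integral_le_lintegral_enorm _

theorem lintegral_enorm_convolution_dilate_sub_le (h : IsWeakPoissonGradient g ρ₀ ρ₁)
    (hg : Integrable g) (hK : Differentiable ℝ K) (hKA : ∀ z, ‖K z‖ ≤ A) (hφ : IsBoundedTest B φ)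
    (hKφ : ∀ z, (finrank ℝ E : ℝ) * K z + fderiv ℝ K z z = -Δ φ z) {ε δ : ℝ} (hε : 0 < ε)
    (hεδ : ε ≤ δ) :
    ∫⁻ x, ‖(dilate δ K ⋆[lsmul ℝ ℝ, volume] g) x - (dilate ε K ⋆[lsmul ℝ ℝ, volume] g) x‖ₑ ≤
      ENNReal.ofReal (δ - ε) * ((∫⁻ z, ‖∇ φ z‖ₑ) * (ρ₀ + ρ₁) Set.univ) := by
  have hmeas : Measurable (∇ φ) := hφ.continuous_gradient.measurable
  have hmeas_prod : Measurable fun p : (E × ℝ) × E ↦ ‖dilate p.1.2 (∇ φ) (p.1.1 - p.2)‖ₑ :=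
    ((measurable_uncurry_dilate hmeas).comp
      (by fun_prop : Measurable fun p : (E × ℝ) × E ↦ (p.1.2, p.1.1 - p.2))).enorm
  calc _ ≤ ∫⁻ x, ∫⁻ r in Set.Ioc ε δ, ∫⁻ y, ‖dilate r (∇ φ) (x - y)‖ₑ ∂(ρ₀ + ρ₁) :=
        lintegral_mono (h.enorm_convolution_dilate_sub_le hg hK hKA hφ hKφ hε hεδ)
    _ = ∫⁻ r in Set.Ioc ε δ, ∫⁻ x, ∫⁻ y, ‖dilate r (∇ φ) (x - y)‖ₑ ∂(ρ₀ + ρ₁) :=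
        lintegral_lintegral_swap hmeas_prod.lintegral_prod_right'.aemeasurable
    _ = ∫⁻ _ in Set.Ioc ε δ, (∫⁻ z, ‖∇ φ z‖ₑ) * (ρ₀ + ρ₁) Set.univ :=
        setLIntegral_congr_fun measurableSet_Ioc fun r hr ↦
          lintegral_lintegral_enorm_dilate_sub hmeas _ (hε.trans hr.1)
    _ = _ := by rw [setLIntegral_const, Real.volume_Ioc, mul_comm]

theorem lintegral_enorm_convolution_dilate_sub_self_le (h : IsWeakPoissonGradient g ρ₀ ρ₁)
    (hg : Integrable g) (hK : Differentiable ℝ K) (hKA : ∀ z, ‖K z‖ ≤ A) (hK_int : Integrable K)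
    (hK_one : ∫ z, K z = 1) (hφ : IsBoundedTest B φ)
    (hKφ : ∀ z, (finrank ℝ E : ℝ) * K z + fderiv ℝ K z z = -Δ φ z) {δ : ℝ} (hδ : 0 < δ) :
    ∫⁻ x, ‖(dilate δ K ⋆[lsmul ℝ ℝ, volume] g) x - g x‖ₑ ≤
      ENNReal.ofReal δ * ((∫⁻ z, ‖∇ φ z‖ₑ) * (ρ₀ + ρ₁) Set.univ) := by
  have hconv {r : ℝ} (hr : 0 < r) : Integrable (dilate r K ⋆[lsmul ℝ ℝ, volume] g) :=
    (integrable_dilate hK_int hr).integrable_convolution _ hg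
  have hlim := (tendsto_lintegral_enorm_convolution_dilate_sub hK_int hK_one hg).const_add
    (ENNReal.ofReal δ * ((∫⁻ z, ‖∇ φ z‖ₑ) * (ρ₀ + ρ₁) Set.univ))
  rw [add_zero] at hlim
  refine ge_of_tendsto hlim ?_
  filter_upwards [Ioc_mem_nhdsGT hδ] with ε ⟨hε, hεδ⟩
  calc ∫⁻ x, ‖(dilate δ K ⋆[lsmul ℝ ℝ, volume] g) x - g x‖ₑ
      ≤ ∫⁻ x, (‖(dilate δ K ⋆[lsmul ℝ ℝ, volume] g) x -
          (dilate ε K ⋆[lsmul ℝ ℝ, volume] g) x‖ₑ +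
            ‖(dilate ε K ⋆[lsmul ℝ ℝ, volume] g) x - g x‖ₑ) := by
        refine lintegral_mono fun x ↦ ?_
        simpa only [edist_eq_enorm_sub] using edist_triangle (α := E) _ _ _
    _ = (∫⁻ x, ‖(dilate δ K ⋆[lsmul ℝ ℝ, volume] g) x -
          (dilate ε K ⋆[lsmul ℝ ℝ, volume] g) x‖ₑ) +
            ∫⁻ x, ‖(dilate ε K ⋆[lsmul ℝ ℝ, volume] g) x - g x‖ₑ :=
        lintegral_add_left' ((hconv hδ).1.sub (hconv hε).1).enorm _
    _ ≤ _ := by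
        gcongr
        refine (h.lintegral_enorm_convolution_dilate_sub_le hg hK hKA hφ hKφ hε hεδ).trans ?_
        gcongr
        exact sub_le_self _ hε.le

end IsWeakPoissonGradient

end MollificationError

section Gaussian

variable {E : Type*} [NormedAddCommGroup E]

/-- The Gaussian `z ↦ a exp (-b |z|²)`; the mollifier `G_δ` is `dilate δ (gaussian 1 π)`. -/
noncomputable def gaussian (a b : ℝ) (z : E) : ℝ :=
  a * exp (-(b * ‖z‖ ^ 2))

theorem abs_gaussian_le (a : ℝ) {b : ℝ} (hb : 0 ≤ b) (z : E) : |gaussian a b z| ≤ |a| := by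
  rw [gaussian, abs_mul, abs_exp]
  exact mul_le_of_le_one_right (abs_nonneg a) (exp_le_one_iff.2 (neg_nonpos.2 (by positivity)))

theorem mul_norm_sq_mul_abs_gaussian_le (a b : ℝ) (z : E) :
    b * ‖z‖ ^ 2 * |gaussian a b z| ≤ |a| := by
  have h : b * ‖z‖ ^ 2 * exp (-(b * ‖z‖ ^ 2)) ≤ 1 := by
    rw [exp_neg, ← div_eq_mul_inv, div_le_one (exp_pos _)]
    linarith [add_one_le_exp (b * ‖z‖ ^ 2)]
  calc b * ‖z‖ ^ 2 * |gaussian a b z|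
      = |a| * (b * ‖z‖ ^ 2 * exp (-(b * ‖z‖ ^ 2))) := by
        rw [gaussian, abs_mul, abs_exp]
        ring
    _ ≤ |a| := mul_le_of_le_one_right (abs_nonneg a) h

variable [InnerProductSpace ℝ E] (a b : ℝ)

theorem dilate_gaussian_one_pi (δ : ℝ) (z : E) :
    dilate δ (gaussian 1 π) z = δ ^ (-(finrank ℝ E : ℤ)) * exp (-(π * ‖z‖ ^ 2 / δ ^ 2)) := by
  simp only [dilate, gaussian, norm_smul, norm_inv, norm_eq_abs, mul_pow, inv_pow, sq_abs,
    smul_eq_mul, one_mul, zpow_neg, zpow_natCast]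
  ring_nf

theorem contDiff_gaussian : ContDiff ℝ ∞ (gaussian a b : E → ℝ) :=
  contDiff_const.mul (contDiff_const.mul (contDiff_norm_sq ℝ)).neg.exp

theorem differentiable_gaussian : Differentiable ℝ (gaussian a b : E → ℝ) :=
  (contDiff_gaussian a b).differentiable (by simp)

theorem fderiv_gaussian_apply (z v : E) :
    fderiv ℝ (gaussian a b) z v = -(2 * b) * (gaussian a b z * ⟪z, v⟫) := by
  have h : HasFDerivAt (gaussian a b) _ z :=
    (((hasStrictFDerivAt_norm_sq z).hasFDerivAt.const_mul b).neg.exp).const_mul a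
  rw [h.fderiv]
  simp [gaussian]
  ring

theorem laplacian_gaussian [FiniteDimensional ℝ E] (z : E) :
    Δ (gaussian a b : E → ℝ) z = 2 * b * (2 * b * ‖z‖ ^ 2 - finrank ℝ E) * gaussian a b z := by
  let e := stdOrthonormalBasis ℝ E
  have hsnd (v : E) : fderiv ℝ (fun y ↦ fderiv ℝ (gaussian a b) y v) z v =
      4 * b ^ 2 * gaussian a b z * ⟪z, v⟫ ^ 2 - 2 * b * gaussian a b z * ‖v‖ ^ 2 := by
    have hinner : DifferentiableAt ℝ (fun y ↦ ⟪y, v⟫) z :=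
      differentiableAt_id.inner ℝ (differentiableAt_const v)
    simp only [fderiv_gaussian_apply]
    rw [fderiv_const_mul ((differentiable_gaussian a b z).fun_mul hinner),
      fderiv_fun_mul (differentiable_gaussian a b z) hinner]
    have hinner' : fderiv ℝ (fun y ↦ ⟪y, v⟫) z v = ‖v‖ ^ 2 := by
      rw [fderiv_inner_apply ℝ differentiableAt_fun_id (differentiableAt_const v)]
      simp
    simp [fderiv_gaussian_apply, hinner']
    ring
  rw [laplacian_eq_sum_fderiv_fderiv e (contDiff_infty.1 (contDiff_gaussian a b) 2)]
  simp only [hsnd, e.norm_eq_one, Finset.sum_sub_distrib, ← Finset.mul_sum, e.sum_sq_inner_left]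
  simp
  ring

variable [FiniteDimensional ℝ E]

theorem finrank_mul_gaussian_add_fderiv (z : E) :
    (finrank ℝ E : ℝ) * gaussian 1 π z + fderiv ℝ (gaussian 1 π) z z =
      -Δ (gaussian (2 * π)⁻¹ π : E → ℝ) z := by
  rw [fderiv_gaussian_apply, laplacian_gaussian, real_inner_self_eq_norm_sq]
  simp only [gaussian]
  field_simp
  ring

theorem gradient_gaussian (z : E) :
    ∇ (gaussian a b) z = (-(2 * b) * gaussian a b z) • z :=
  ext_inner_right ℝ fun v ↦ by
    rw [inner_gradient_left, fderiv_gaussian_apply, real_inner_smul_left, mul_assoc]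

variable {b}

theorem exists_isBoundedTest_gaussian (hb : 0 ≤ b) :
    ∃ B, IsBoundedTest B (gaussian a b : E → ℝ) := by
  refine IsBoundedTest.exists_of_exists_bounds (contDiff_gaussian a b) ⟨|a|, abs_gaussian_le a hb⟩
    ⟨2 * (b * |a| + |a|), fun z ↦ ?_⟩ ⟨2 * b * (2 * |a| + finrank ℝ E * |a|), fun z ↦ ?_⟩
  · have habs := abs_gaussian_le a hb z
    have hsq := mul_norm_sq_mul_abs_gaussian_le a b z
    have hz : ‖z‖ ≤ 1 + ‖z‖ ^ 2 := by nlinarith [sq_nonneg (‖z‖ - 1), norm_nonneg z]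
    calc ‖∇ (gaussian a b : E → ℝ) z‖
        = 2 * (b * ‖z‖ * |gaussian a b z|) := by
          rw [gradient_gaussian, norm_smul, norm_eq_abs, abs_mul, abs_neg, abs_mul, abs_two,
            abs_of_nonneg hb]
          ring
      _ ≤ 2 * (b * (1 + ‖z‖ ^ 2) * |gaussian a b z|) := by gcongr
      _ = 2 * (b * |gaussian a b z| + b * ‖z‖ ^ 2 * |gaussian a b z|) := by ring
      _ ≤ 2 * (b * |a| + |a|) := by
          gcongr
  · have habs := abs_gaussian_le a hb z
    have hsq := mul_norm_sq_mul_abs_gaussian_le a b z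
    calc |Δ (gaussian a b : E → ℝ) z|
        = 2 * b * |2 * (b * ‖z‖ ^ 2 * gaussian a b z) - finrank ℝ E * gaussian a b z| := by
          rw [laplacian_gaussian, ← abs_of_nonneg (by positivity : 0 ≤ 2 * b), ← abs_mul,
            abs_of_nonneg (by positivity : 0 ≤ 2 * b)]
          ring_nf
      _ ≤ 2 * b * (2 * (b * ‖z‖ ^ 2 * |gaussian a b z|) + finrank ℝ E * |gaussian a b z|) := by
          gcongr
          refine (abs_sub _ _).trans_eq ?_
          simp only [abs_mul, abs_of_nonneg hb, abs_two, abs_pow, abs_norm, Nat.abs_cast]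
      _ ≤ 2 * b * (2 * |a| + finrank ℝ E * |a|) := by
          gcongr

variable [MeasurableSpace E] [BorelSpace E]

theorem integral_gaussian_one_pi : ∫ z : E, gaussian 1 π z = 1 := by
  simpa [gaussian, pi_ne_zero] using GaussianFourier.integral_rexp_neg_mul_sq_norm (V := E) pi_pos

theorem integrable_gaussian (hb : 0 < b) : Integrable (gaussian a b : E → ℝ) := by
  have h : Integrable fun z : E ↦ exp (-(b * ‖z‖ ^ 2)) := by
    refine not_imp_comm.1 integral_undef ?_
    simp only [← neg_mul]
    rw [GaussianFourier.integral_rexp_neg_mul_sq_norm hb]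
    positivity
  exact h.const_mul a

theorem integrable_norm_mul_gaussian (hb : 0 < b) :
    Integrable fun z : E ↦ ‖z‖ * gaussian a b z := by
  refine (integrable_gaussian (|a| * exp (1 / (2 * b))) (half_pos hb)).mono'
    (continuous_norm.mul (contDiff_gaussian a b).continuous).aestronglyMeasurable
    (.of_forall fun z ↦ ?_)
  have hz : ‖z‖ ≤ exp (1 / (2 * b) + b / 2 * ‖z‖ ^ 2) := by
    refine (le_add_of_nonneg_right zero_le_one).trans ((add_one_le_exp _).trans (exp_le_exp.2 ?_))
    have hsq : 0 ≤ b / 2 * (‖z‖ - 1 / b) ^ 2 := by positivity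
    have : 1 / (2 * b) + b / 2 * ‖z‖ ^ 2 - ‖z‖ = b / 2 * (‖z‖ - 1 / b) ^ 2 := by
      field_simp
      ring
    linarith
  calc ‖‖z‖ * gaussian a b z‖
      = ‖z‖ * (|a| * exp (-(b * ‖z‖ ^ 2))) := by
        rw [norm_mul, norm_norm, norm_eq_abs, gaussian, abs_mul, abs_exp]
    _ ≤ exp (1 / (2 * b) + b / 2 * ‖z‖ ^ 2) * (|a| * exp (-(b * ‖z‖ ^ 2))) := by gcongr
    _ = gaussian (|a| * exp (1 / (2 * b))) (b / 2) z := by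
        rw [gaussian, mul_left_comm, mul_assoc |a|, ← exp_add, ← exp_add]
        ring_nf

theorem lintegral_enorm_gradient_gaussian :
    ∫⁻ z : E, ‖∇ (gaussian (2 * π)⁻¹ π) z‖ₑ =
      ENNReal.ofReal (∫ z : E, ‖z‖ * exp (-(π * ‖z‖ ^ 2))) := by
  have hnorm (z : E) : ‖∇ (gaussian (2 * π)⁻¹ π) z‖ₑ = ‖‖z‖ * gaussian 1 π z‖ₑ := by
    have hcoeff : -(2 * π) * gaussian (2 * π)⁻¹ π z = -gaussian 1 π z := by
      simp only [gaussian]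
      field_simp
    rw [gradient_gaussian, hcoeff, neg_smul, enorm_neg, enorm_smul, enorm_mul, enorm_norm, mul_comm]
  simp only [hnorm]
  rw [← ofReal_integral_norm_eq_lintegral_enorm (integrable_norm_mul_gaussian 1 pi_pos)]
  simp only [gaussian, one_mul, norm_mul, norm_norm, norm_of_nonneg (exp_pos _).le]

end Gaussian

end PoissonMollification

section Main

open Module PoissonMollification
open ContinuousLinearMap (lsmul)
open scoped Convolution ContDiff Gradient InnerProductSpace Laplacian

theorem poisson_mollification_L1_estimate_general {E : Type*} [NormedAddCommGroup E]
    [InnerProductSpace ℝ E] [FiniteDimensional ℝ E] [MeasurableSpace E] [BorelSpace E]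
    {ρ₀ ρ₁ : Measure E} [IsFiniteMeasure ρ₀] [IsFiniteMeasure ρ₁] {ψ : E → ℝ} {g : E → E}
    (hψ : LocallyIntegrable ψ) (hg : Integrable g)
    (hgrad : ∀ φ : E → ℝ, ContDiff ℝ ∞ φ → HasCompactSupport φ →
      ∫ x, ψ x • ∇ φ x = -∫ x, φ x • g x)
    (hlap : ∀ φ : E → ℝ, ContDiff ℝ ∞ φ → HasCompactSupport φ →
      ∫ x, ψ x * Δ φ x = (∫ x, φ x ∂ρ₁) - ∫ x, φ x ∂ρ₀)
    {δ : ℝ} (hδ : 0 < δ) :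
    ∫ x, ‖(∫ y, (δ ^ (-(finrank ℝ E : ℤ)) * exp (-(π * ‖x - y‖ ^ 2 / δ ^ 2))) • g y) - g x‖ ≤
      (∫ z : E, ‖z‖ * exp (-(π * ‖z‖ ^ 2))) * δ *
        ((ρ₁ Set.univ).toReal + (ρ₀ Set.univ).toReal) := by
  obtain ⟨B, hΦ⟩ := exists_isBoundedTest_gaussian (E := E) (2 * π)⁻¹ pi_pos.le
  have hK : Integrable (gaussian 1 π : E → ℝ) := integrable_gaussian 1 pi_pos
  have hmollify (x : E) :
      ∫ y, (δ ^ (-(finrank ℝ E : ℤ)) * exp (-(π * ‖x - y‖ ^ 2 / δ ^ 2))) • g y =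
        (dilate δ (gaussian 1 π) ⋆[lsmul ℝ ℝ, volume] g) x := by
    simp only [convolution_lsmul_swap, dilate_gaussian_one_pi]
  have hmain := (isWeakPoissonGradient_of_potential hψ hgrad hlap)
    |>.lintegral_enorm_convolution_dilate_sub_self_le hg (differentiable_gaussian 1 π)
      (abs_gaussian_le 1 pi_pos.le) hK integral_gaussian_one_pi hΦ
      finrank_mul_gaussian_add_fderiv hδ
  have hmollified_meas :
      AEStronglyMeasurable fun x ↦ (dilate δ (gaussian 1 π) ⋆[lsmul ℝ ℝ, volume] g) x - g x :=
    (((integrable_dilate hK hδ).integrable_convolution _ hg).sub hg).1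
  simp only [hmollify]
  rw [integral_norm_eq_lintegral_enorm hmollified_meas]
  refine ENNReal.toReal_le_of_le_ofReal (by positivity) (hmain.trans_eq ?_)
  rw [lintegral_enorm_gradient_gaussian, Measure.add_apply, ENNReal.ofReal_mul (by positivity),
    ENNReal.ofReal_mul (by positivity), ENNReal.ofReal_add (by positivity) (by positivity),
    ENNReal.ofReal_toReal (by finiteness), ENNReal.ofReal_toReal (by finiteness)]
  ring

end Main

/-- **Mollification estimate for the gradient of the Poisson potential
(first appendix lemma, whole-space form).** For d ≥ 2 there is a dimensional
constant C_d such that whenever Δψ = ρ¹ − ρ⁰ distributionally with ∇ψ ∈ L¹,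
‖G_δ * ∇ψ − ∇ψ‖_{L¹} ≤ C_d δ (|log δ| + 1)(ρ¹(ℝ^d) + ρ⁰(ℝ^d)) for 0 < δ ≤ 1/2. -/
theorem poisson_mollification_L1_estimate (d : ℕ) (hd : 2 ≤ d) :
    ∃ C : ℝ, 0 < C ∧
      ∀ (ρ0 ρ1 : Measure (EuclideanSpace ℝ (Fin d))),
        IsFiniteMeasure ρ0 → IsFiniteMeasure ρ1 →
        ∀ (ψ : EuclideanSpace ℝ (Fin d) → ℝ)
          (gψ : EuclideanSpace ℝ (Fin d) → EuclideanSpace ℝ (Fin d)),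
          MeasureTheory.LocallyIntegrable ψ volume →
          MeasureTheory.Integrable gψ volume →
          -- gψ is the distributional gradient of ψ
          (∀ φ : EuclideanSpace ℝ (Fin d) → ℝ, ContDiff ℝ (⊤ : ℕ∞) φ → HasCompactSupport φ →
            ∫ x : EuclideanSpace ℝ (Fin d), ψ x • gradient φ x
              = - ∫ x : EuclideanSpace ℝ (Fin d), φ x • gψ x) →
          -- Δψ = ρ¹ − ρ⁰ in the sense of distributions
          (∀ φ : EuclideanSpace ℝ (Fin d) → ℝ, ContDiff ℝ (⊤ : ℕ∞) φ → HasCompactSupport φ →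
            ∫ x : EuclideanSpace ℝ (Fin d),
              ψ x * (∑ i : Fin d,
                fderiv ℝ (fun y => fderiv ℝ φ y (EuclideanSpace.single i (1 : ℝ))) x
                  (EuclideanSpace.single i (1 : ℝ)))
              = (∫ x, φ x ∂ρ1) - ∫ x, φ x ∂ρ0) →
          ∀ δ : ℝ, 0 < δ → δ ≤ 1 / 2 →
            ∫ x : EuclideanSpace ℝ (Fin d),
              ‖(∫ y : EuclideanSpace ℝ (Fin d),
                  (δ ^ (-(d : ℤ)) * Real.exp (-(π * ‖x - y‖ ^ 2 / δ ^ 2))) • gψ y)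
                - gψ x‖
            ≤ C * δ * (|Real.log δ| + 1) * ((ρ1 Set.univ).toReal + (ρ0 Set.univ).toReal) := by
  refine ⟨(∫ z : EuclideanSpace ℝ (Fin d), ‖z‖ * exp (-(π * ‖z‖ ^ 2))) + 1, by positivity,
    fun ρ0 ρ1 _ _ ψ gψ hψ hgψ hgrad hlap δ hδ _ ↦ ?_⟩
  have hlinear := poisson_mollification_L1_estimate_general hψ hgψ hgrad (fun φ hφ hφ_supp ↦ by
    simpa only [PoissonMollification.sum_fderiv_single_fderiv_single (contDiff_infty.1 hφ 2)]
      using hlap φ hφ hφ_supp) hδ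
  rw [finrank_euclideanSpace_fin, ← mul_one (_ * δ)] at hlinear
  refine hlinear.trans ?_
  gcongr <;> simp
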